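/- Let b be a graph over a countably infinite set X and let q : X → [0,∞) be a finitely supported potential; set H = L + q. Let u ∈ F(X) be a strictly positive nonconstant H-superharmonic function on X that is L-harmonic outside a finite set, and set w := L[u^{1/2}] / u^{1/2}. Assume that h − w is critical in X (i.e. h(φ) ≥ Σ_x w(x)φ(x)² for all finitely supported φ, and no w̃ : X → [0,∞), w̃ ≠ 0, satisfies h(φ) ≥ Σ_x (w(x)+w̃(x))φ(x)² for all finitely supported φ), and that the extended form satisfies h(u^{1/2}) = (1/2)Σ_{x,y} b(x,y)(u(x)^{1/2} − u(y)^{1/2})² + Σ_x q(x)u(x) = ∞. Then for every finite W ⊆ X and every λ > 0, the inequality h − (1+λ)w ≥ 0 fails on C_c(X∖W): there exists a finitely supported φ with support contained in X∖W such that h(φ) < (1+λ)·Σ_{x∈X} w(x)φ(x)². -/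

import Mathlib

/-- `f` belongs to `F(X)`: `∑_y b x y |f y| < ∞` for every `x`. -/
def memF {X : Type} (b : X → X → ℝ) (f : X → ℝ) : Prop :=
  ∀ x : X, Summable fun y => b x y * |f y|

/-- The formal graph Laplacian `L f x = ∑_y b x y (f x - f y)`. -/
noncomputable def lap {X : Type} (b : X → X → ℝ) (f : X → ℝ) (x : X) : ℝ :=
  ∑' y : X, b x y * (f x - f y)

/-- The formal Schrödinger operator `H = L + q`. -/
noncomputable def schrod {X : Type} (b : X → X → ℝ) (q : X → ℝ) (f : X → ℝ) (x : X) : ℝ :=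
  lap b f x + q x * f x

/-- The quadratic form `h(φ)` of `H = L + q`. -/
noncomputable def quadForm {X : Type} (b : X → X → ℝ) (q : X → ℝ) (φ : X → ℝ) : ℝ :=
  (1 / 2) * (∑' p : X × X, b p.1 p.2 * (φ p.1 - φ p.2) ^ 2) + ∑' x : X, q x * φ x ^ 2

open scoped ENNReal

/-!
A positive supersolution `v` of `H - w` turns `h - w` into another graph form with nonnegative
potential, through `φ = v ψ` (ground state representation). Criticality says that every vertex has
zero capacity for this new form, so there are finitely supported `ψ`, equal to `1` on any prescribed
finite set, of arbitrarily small energy. If `h ≥ (1 + lam) w` held off a finite set `W`, then `h`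
would be bounded by `1 + 1 / lam` times the new form off `W`; as changing a function on `W` costs a
bounded amount, the functions `v ψ` would have bounded `h`-energy while exhausting `v`, and `h(v)`
would be finite by Fatou's lemma. The case at hand is `v = √u`, for which `w v = L v ≤ H v`.
-/

open Function

section Summability

variable {α β : Type*}

lemma summable_mul_sq_of_hasFiniteSupport (w : α → ℝ) {φ : α → ℝ} (hφ : HasFiniteSupport φ) :
    Summable fun x => w x * φ x ^ 2 := by
  simp only [sq]
  exact summable_of_hasFiniteSupport (by fun_prop)

lemma summable_prod_mul_of_hasFiniteSupport {f : α → ℝ} (hf : HasFiniteSupport f)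
    {k : α → β → ℝ} (hk : ∀ x, Summable (k x)) :
    Summable fun p : α × β => f p.1 * k p.1 p.2 := by
  refine .of_norm ((summable_prod_of_nonneg fun _ => norm_nonneg _).2
    ⟨fun x => ((hk x).mul_left (f x)).norm, ?_⟩)
  simp only [norm_mul, tsum_mul_left]
  exact summable_of_hasFiniteSupport ((hf.fun_comp norm_zero).fun_mul_left _)

end Summability

/-- Nonnegative symmetric edge weights with summable rows. Diagonal weights are allowed, since they
contribute neither to the Laplacian nor to the quadratic form. -/
structure IsGraph {X : Type} (b : X → X → ℝ) : Prop where
  nonneg : ∀ x y, 0 ≤ b x y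
  symm : ∀ x y, b x y = b y x
  summable : ∀ x, Summable (b x)

/-- Criticality of `h - w`: it is nonnegative on finitely supported functions, and `w` cannot be
replaced there by a larger weight. -/
def IsCritical {X : Type} (b : X → X → ℝ) (q w : X → ℝ) : Prop :=
  (∀ φ : X → ℝ, φ.support.Finite → quadForm b q φ ≥ ∑' x, w x * φ x ^ 2) ∧
    ¬ ∃ wt : X → ℝ, 0 ≤ wt ∧ wt ≠ 0 ∧
      ∀ φ : X → ℝ, φ.support.Finite → quadForm b q φ ≥ ∑' x, (w x + wt x) * φ x ^ 2

/-- The form `h` extended to all functions, with values in `[0, ∞]`, for a nonnegative potential. -/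
noncomputable def extQuadForm {X : Type} (b : X → X → ℝ) (q f : X → ℝ) : ℝ≥0∞ :=
  (1 / 2) * (∑' p : X × X, ENNReal.ofReal (b p.1 p.2 * (f p.1 - f p.2) ^ 2)) +
    ∑' x, ENNReal.ofReal (q x * f x ^ 2)

variable {X : Type} {b : X → X → ℝ} {q w v φ ψ χ : X → ℝ}

lemma quadForm_const_mul (b : X → X → ℝ) (q : X → ℝ) (a : ℝ) (φ : X → ℝ) :
    quadForm b q (fun x => a * φ x) = a ^ 2 * quadForm b q φ := by
  have hedge : ∀ x y, b x y * (a * φ x - a * φ y) ^ 2 = a ^ 2 * (b x y * (φ x - φ y) ^ 2) :=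
    fun x y => by ring
  have hvertex : ∀ x, q x * (a * φ x) ^ 2 = a ^ 2 * (q x * φ x ^ 2) := fun x => by ring
  simp only [quadForm, hedge, hvertex, tsum_mul_left]
  ring

lemma quadForm_zero (b : X → X → ℝ) (q : X → ℝ) : quadForm b q (fun _ => 0) = 0 := by
  simp [quadForm]

namespace IsGraph

lemma quadForm_nonneg (hb : IsGraph b) (hq : 0 ≤ q) (φ : X → ℝ) : 0 ≤ quadForm b q φ :=
  add_nonneg
    (mul_nonneg one_half_pos.le
      (tsum_nonneg fun p => mul_nonneg (hb.nonneg p.1 p.2) (sq_nonneg _)))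
    (tsum_nonneg fun x => mul_nonneg (hq x) (sq_nonneg _))

lemma summable_energy (hb : IsGraph b) (hφ : HasFiniteSupport φ) :
    Summable fun p : X × X => b p.1 p.2 * (φ p.1 - φ p.2) ^ 2 := by
  have hφ_sq : HasFiniteSupport fun x => φ x ^ 2 := hφ.fun_comp (g := (· ^ 2)) (by simp)
  have hfst : Summable fun p : X × X => φ p.1 ^ 2 * b p.1 p.2 :=
    summable_prod_mul_of_hasFiniteSupport hφ_sq hb.summable
  have hsnd : Summable fun p : X × X => φ p.2 ^ 2 * b p.2 p.1 :=
    (Equiv.prodComm X X).summable_iff.mpr hfst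
  refine .of_nonneg_of_le (fun p => mul_nonneg (hb.nonneg _ _) (sq_nonneg _)) (fun p => ?_)
    ((hfst.add hsnd).mul_left 2)
  rw [hb.symm p.2 p.1]
  linarith [mul_nonneg (hb.nonneg p.1 p.2) (sq_nonneg (φ p.1 + φ p.2))]

lemma quadForm_le_mul_add (hb : IsGraph b) (hq : 0 ≤ q) (hφ : HasFiniteSupport φ)
    (hψ : HasFiniteSupport ψ) (hχ : HasFiniteSupport χ) {k : ℝ}
    (hedge : ∀ x y, (χ x - χ y) ^ 2 ≤ k * ((φ x - φ y) ^ 2 + (ψ x - ψ y) ^ 2))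
    (hvertex : ∀ x, χ x ^ 2 ≤ k * (φ x ^ 2 + ψ x ^ 2)) :
    quadForm b q χ ≤ k * (quadForm b q φ + quadForm b q ψ) := by
  have hE := ((hb.summable_energy hφ).hasSum.add (hb.summable_energy hψ).hasSum).mul_left k
  have hV := ((summable_mul_sq_of_hasFiniteSupport q hφ).hasSum.add
    (summable_mul_sq_of_hasFiniteSupport q hψ).hasSum).mul_left k
  have hE_le := hasSum_le (fun p => ?_) (hb.summable_energy hχ).hasSum hE
  · have hV_le := hasSum_le (fun x => ?_) (summable_mul_sq_of_hasFiniteSupport q hχ).hasSum hV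
    · unfold quadForm
      linarith
    · linarith [mul_le_mul_of_nonneg_left (hvertex x) (hq x)]
  · linarith [mul_le_mul_of_nonneg_left (hedge p.1 p.2) (hb.nonneg p.1 p.2)]

lemma quadForm_add_le (hb : IsGraph b) (hq : 0 ≤ q) (hφ : HasFiniteSupport φ)
    (hψ : HasFiniteSupport ψ) :
    quadForm b q (fun x => φ x + ψ x) ≤ 2 * (quadForm b q φ + quadForm b q ψ) := by
  refine hb.quadForm_le_mul_add hq hφ hψ (by fun_prop) (fun x y => ?_) fun x => add_sq_le
  rw [add_sub_add_comm]
  exact add_sq_le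

lemma quadForm_sub_le (hb : IsGraph b) (hq : 0 ≤ q) (hφ : HasFiniteSupport φ)
    (hψ : HasFiniteSupport ψ) :
    quadForm b q (fun x => φ x - ψ x) ≤ 2 * (quadForm b q φ + quadForm b q ψ) := by
  have hadd := hb.quadForm_add_le hq hφ (ψ := fun x => -1 * ψ x) (by fun_prop)
  rw [quadForm_const_mul, neg_one_sq, one_mul] at hadd
  simpa only [neg_one_mul, ← sub_eq_add_neg] using hadd

lemma quadForm_max_le (hb : IsGraph b) (hq : 0 ≤ q) (hφ : HasFiniteSupport φ)
    (hψ : HasFiniteSupport ψ) :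
    quadForm b q (fun x => max (φ x) (ψ x)) ≤ quadForm b q φ + quadForm b q ψ := by
  rw [← one_mul (quadForm b q φ + quadForm b q ψ)]
  refine hb.quadForm_le_mul_add hq hφ hψ (by fun_prop) (fun x y => ?_) fun x => ?_
  · rcases le_max_iff.mp (abs_max_sub_max_le_max (φ x) (ψ x) (φ y) (ψ y)) with h | h
    · linarith [sq_le_sq.mpr h, sq_nonneg (ψ x - ψ y)]
    · linarith [sq_le_sq.mpr h, sq_nonneg (φ x - φ y)]
  · rcases max_choice (φ x) (ψ x) with h | h <;> rw [h]
    · linarith [sq_nonneg (ψ x)]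
    · linarith [sq_nonneg (φ x)]

lemma quadForm_min_one_abs_le (hb : IsGraph b) (hq : 0 ≤ q) (hφ : HasFiniteSupport φ) :
    quadForm b q (fun x => min |φ x| 1) ≤ quadForm b q φ := by
  have hfin : HasFiniteSupport fun x => min |φ x| 1 :=
    hφ.fun_comp (g := fun t => min |t| 1) (by simp)
  have hle := hb.quadForm_le_mul_add hq hφ (ψ := fun _ => 0) (by fun_prop) hfin (k := 1)
    (fun x y => ?_) fun x => ?_
  · simpa only [quadForm_zero, add_zero, one_mul] using hle
  · have hcontr : |min |φ x| 1 - min |φ y| 1| ≤ |φ x - φ y| :=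
      (abs_min_sub_min_le_max _ _ _ _).trans
        (max_le (abs_abs_sub_abs_le _ _) (by simp))
    simpa using sq_le_sq.mpr hcontr
  · have hmin : |min |φ x| 1| ≤ |φ x| := by
      rw [abs_of_nonneg (by positivity)]
      exact min_le_left _ _
    simpa using sq_le_sq.mpr hmin

lemma extQuadForm_eq_ofReal (hb : IsGraph b) (hq : 0 ≤ q) (hφ : HasFiniteSupport φ) :
    extQuadForm b q φ = ENNReal.ofReal (quadForm b q φ) := by
  have hedge : ∀ p : X × X, 0 ≤ b p.1 p.2 * (φ p.1 - φ p.2) ^ 2 :=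
    fun p => mul_nonneg (hb.nonneg _ _) (sq_nonneg _)
  have hvertex : ∀ x, 0 ≤ q x * φ x ^ 2 := fun x => mul_nonneg (hq x) (sq_nonneg _)
  rw [quadForm, ENNReal.ofReal_add (mul_nonneg one_half_pos.le (tsum_nonneg hedge))
      (tsum_nonneg hvertex), ENNReal.ofReal_mul one_half_pos.le,
    ENNReal.ofReal_tsum_of_nonneg hedge (hb.summable_energy hφ),
    ENNReal.ofReal_tsum_of_nonneg hvertex (summable_mul_sq_of_hasFiniteSupport q hφ), extQuadForm,
    ENNReal.ofReal_div_of_pos two_pos, ENNReal.ofReal_one, ENNReal.ofReal_ofNat]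

end IsGraph

-- Fatou's lemma for the extended form.
lemma extQuadForm_le_of_forall_finset {f : X → ℝ} {C : ℝ≥0∞}
    (h : ∀ F : Finset X, ∃ φ : X → ℝ, (∀ x ∈ F, φ x = f x) ∧ extQuadForm b q φ ≤ C) :
    extQuadForm b q f ≤ C := by
  classical
  rw [extQuadForm, ENNReal.tsum_eq_iSup_sum, ENNReal.tsum_eq_iSup_sum, ENNReal.mul_iSup]
  refine ENNReal.iSup_add_iSup_le fun T S => ?_
  obtain ⟨φ, hφ, hC⟩ := h (T.image Prod.fst ∪ T.image Prod.snd ∪ S)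
  have hfst : ∀ p ∈ T, φ p.1 = f p.1 := fun p hp => hφ _ (by grind)
  have hsnd : ∀ p ∈ T, φ p.2 = f p.2 := fun p hp => hφ _ (by grind)
  have hS : ∀ x ∈ S, φ x = f x := fun x hx => hφ _ (by grind)
  rw [Finset.sum_congr rfl fun p hp => by rw [← hfst p hp, ← hsnd p hp],
    Finset.sum_congr (s₁ := S) rfl fun x hx => by rw [← hS x hx]]
  refine le_trans ?_ hC
  unfold extQuadForm
  gcongr <;> exact ENNReal.sum_le_tsum _

/-- The capacity of the vertex `x`, the infimum of `h(φ)` over finitely supported `φ` with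
`φ x = 1`, is zero. The homogeneous form used here spares the normalization of `φ`. -/
def HasZeroCapacity (b : X → X → ℝ) (q : X → ℝ) (x : X) : Prop :=
  ∀ ε > 0, ∃ φ : X → ℝ, HasFiniteSupport φ ∧ quadForm b q φ < ε * φ x ^ 2

lemma HasZeroCapacity.exists_cutoff {x : X} (hx : HasZeroCapacity b q x) (hb : IsGraph b)
    (hq : 0 ≤ q) {ε : ℝ} (hε : 0 < ε) :
    ∃ φ : X → ℝ, HasFiniteSupport φ ∧ φ ≤ 1 ∧ φ x = 1 ∧ quadForm b q φ ≤ ε := by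
  obtain ⟨φ, hφ, hlt⟩ := hx ε hε
  have hφx : φ x ≠ 0 := fun h0 => by
    rw [h0, zero_pow two_ne_zero, mul_zero] at hlt
    exact hlt.not_ge (hb.quadForm_nonneg hq φ)
  have hfin : HasFiniteSupport fun y => (φ x)⁻¹ * φ y := by fun_prop
  refine ⟨fun y => min |(φ x)⁻¹ * φ y| 1, hfin.fun_comp (g := fun t => min |t| 1) (by simp),
    fun y => min_le_right _ _, by simp [hφx], (hb.quadForm_min_one_abs_le hq hfin).trans ?_⟩
  rw [quadForm_const_mul, inv_pow, inv_mul_le_iff₀ (by positivity), mul_comm]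
  exact hlt.le

lemma exists_cutoff_finset (hb : IsGraph b) (hq : 0 ≤ q) {F : Finset X}
    (hF : ∀ x ∈ F, HasZeroCapacity b q x) {ε : ℝ} (hε : 0 < ε) :
    ∃ φ : X → ℝ, HasFiniteSupport φ ∧ φ ≤ 1 ∧ (∀ x ∈ F, φ x = 1) ∧ quadForm b q φ ≤ ε := by
  classical
  induction F using Finset.induction_on generalizing ε with
  | empty =>
    exact ⟨fun _ => 0, by fun_prop, fun _ => zero_le_one, by simp, by
      rw [quadForm_zero]; exact hε.le⟩
  | insert a F _ ih =>
    rw [Finset.forall_mem_insert] at hF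
    obtain ⟨φ, hφ, hφ_le, hφ_one, hφε⟩ := ih hF.2 (half_pos hε)
    obtain ⟨ψ, hψ, hψ_le, hψ_one, hψε⟩ := hF.1.exists_cutoff hb hq (half_pos hε)
    refine ⟨fun x => max (φ x) (ψ x), by fun_prop, fun x => max_le (hφ_le x) (hψ_le x), ?_,
      by linarith [hb.quadForm_max_le hq hφ hψ]⟩
    refine Finset.forall_mem_insert .. |>.2 ⟨?_, fun x hx => ?_⟩
    · exact (max_eq_right ((hφ_le a).trans_eq hψ_one.symm)).trans hψ_one
    · exact (max_eq_left ((hψ_le x).trans_eq (hφ_one x hx).symm)).trans (hφ_one x hx)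

/-- Edge weights of the ground state transform by `v`: the form `ψ ↦ (h - w)(v ψ)`. -/
def groundGraph (b : X → X → ℝ) (v : X → ℝ) (x y : X) : ℝ :=
  v x * b x y * v y

/-- Potential of the ground state transform of `h - w` by `v`; it is nonnegative exactly where
`(H - w) v ≥ 0`, if `v > 0`. -/
noncomputable def groundPotential (b : X → X → ℝ) (q w v : X → ℝ) (x : X) : ℝ :=
  v x * (schrod b q v x - w x * v x)

lemma groundPotential_nonneg (hv : 0 ≤ v) (hsuper : ∀ x, w x * v x ≤ schrod b q v x) :
    0 ≤ groundPotential b q w v :=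
  fun x => mul_nonneg (hv x) (sub_nonneg.2 (hsuper x))

namespace IsGraph

lemma summable_mul (hb : IsGraph b) (hvF : memF b v) (x : X) : Summable fun y => b x y * v y := by
  refine .of_norm ?_
  simpa only [Real.norm_eq_abs, abs_mul, abs_of_nonneg (hb.nonneg x _)] using hvF x

lemma memF_sqrt (hb : IsGraph b) {u : X → ℝ} (hu : memF b u) : memF b fun x => √(u x) := by
  intro x
  have hsqrt : ∀ t : ℝ, |√t| ≤ 1 + |t| := fun t => by
    rw [abs_of_nonneg (Real.sqrt_nonneg t), Real.sqrt_le_iff]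
    constructor <;> nlinarith [abs_nonneg t, le_abs_self t]
  refine .of_nonneg_of_le (fun y => mul_nonneg (hb.nonneg x y) (abs_nonneg _)) (fun y => ?_)
    ((hb.summable x).add (hu x))
  rw [← mul_one_add]
  exact mul_le_mul_of_nonneg_left (hsqrt (u y)) (hb.nonneg x y)

lemma isGraph_groundGraph (hb : IsGraph b) (hv : 0 ≤ v) (hvF : memF b v) :
    IsGraph (groundGraph b v) where
  nonneg x y := mul_nonneg (mul_nonneg (hv x) (hb.nonneg x y)) (hv y)
  symm x y := by
    rw [groundGraph, groundGraph, hb.symm x y]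
    ring
  summable x := ((hb.summable_mul hvF x).mul_left (v x)).congr fun y => (mul_assoc _ _ _).symm

lemma hasSum_mul_lap (hb : IsGraph b) (hvF : memF b v) {f : X → ℝ} (hf : HasFiniteSupport f) :
    HasSum (fun p : X × X => f p.1 * (b p.1 p.2 * (v p.1 - v p.2))) (∑' x, f x * lap b v x) := by
  have hrow : ∀ x, Summable fun y => b x y * (v x - v y) := fun x => by
    simpa only [mul_sub] using ((hb.summable x).mul_right (v x)).sub (hb.summable_mul hvF x)
  have hsum : Summable fun p : X × X => f p.1 * (b p.1 p.2 * (v p.1 - v p.2)) :=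
    summable_prod_mul_of_hasFiniteSupport hf hrow
  convert hsum.hasSum using 1
  rw [hsum.tsum_prod' fun x => (hrow x).mul_left (f x)]
  exact tsum_congr fun x => tsum_mul_left.symm

lemma tsum_energy_mul (hb : IsGraph b) (hv : 0 ≤ v) (hvF : memF b v) (hψ : HasFiniteSupport ψ) :
    ∑' p : X × X, b p.1 p.2 * (v p.1 * ψ p.1 - v p.2 * ψ p.2) ^ 2 =
      ∑' p : X × X, groundGraph b v p.1 p.2 * (ψ p.1 - ψ p.2) ^ 2 +
        2 * ∑' x, v x * ψ x ^ 2 * lap b v x := by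
  have hvψ : HasFiniteSupport fun x => v x * ψ x ^ 2 :=
    (hψ.fun_comp (g := (· ^ 2)) (by simp)).fun_mul_right v
  have hfst := hb.hasSum_mul_lap hvF hvψ
  have hsnd := (Equiv.prodComm X X).hasSum_iff.mpr hfst
  have henergy := ((hb.isGraph_groundGraph hv hvF).summable_energy hψ).hasSum
  rw [two_mul, ← (henergy.add (hfst.add hsnd)).tsum_eq]
  refine tsum_congr fun p => ?_
  simp only [comp_apply, Equiv.prodComm_apply, Prod.fst_swap, Prod.snd_swap, groundGraph,
    hb.symm p.2 p.1]
  ring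

theorem quadForm_mul_eq_groundState (hb : IsGraph b) (hv : 0 ≤ v) (hvF : memF b v) (q w : X → ℝ)
    (hψ : HasFiniteSupport ψ) :
    quadForm b q (fun x => v x * ψ x) =
      quadForm (groundGraph b v) (groundPotential b q w v) ψ +
        ∑' x, w x * (v x * ψ x) ^ 2 := by
  have hlap : Summable fun x => v x * ψ x ^ 2 * lap b v x := by
    simpa only [mul_right_comm] using
      summable_mul_sq_of_hasFiniteSupport (fun x => v x * lap b v x) hψ
  have hvψ : HasFiniteSupport fun x => v x * ψ x := by fun_prop
  have hvertex : ∑' x, groundPotential b q w v x * ψ x ^ 2 + ∑' x, w x * (v x * ψ x) ^ 2 =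
      ∑' x, v x * ψ x ^ 2 * lap b v x + ∑' x, q x * (v x * ψ x) ^ 2 := by
    rw [← (summable_mul_sq_of_hasFiniteSupport _ hψ).tsum_add
        (summable_mul_sq_of_hasFiniteSupport w hvψ),
      ← hlap.tsum_add (summable_mul_sq_of_hasFiniteSupport q hvψ)]
    refine tsum_congr fun x => ?_
    rw [groundPotential, schrod]
    ring
  rw [quadForm, quadForm, hb.tsum_energy_mul hv hvF hψ]
  linarith

end IsGraph

lemma IsCritical.exists_quadForm_lt (hcrit : IsCritical b q w) (x : X) {ε : ℝ} (hε : 0 < ε) :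
    ∃ φ : X → ℝ, HasFiniteSupport φ ∧
      quadForm b q φ < ∑' y, w y * φ y ^ 2 + ε * φ x ^ 2 := by
  classical
  by_contra! hno
  refine hcrit.2 ⟨Pi.single x ε, Pi.single_nonneg.2 hε.le, by simp [hε.ne'], fun φ hφ => ?_⟩
  have hsingle : ∑' y, (Pi.single x ε : X → ℝ) y * φ y ^ 2 = ε * φ x ^ 2 := by
    rw [tsum_eq_single x fun y hy => by simp [hy], Pi.single_eq_same]
  simp only [add_mul]
  rw [(summable_mul_sq_of_hasFiniteSupport w hφ).tsum_add
    (summable_mul_sq_of_hasFiniteSupport _ hφ), hsingle]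
  exact hno φ hφ

lemma IsCritical.hasZeroCapacity (hcrit : IsCritical b q w) (hb : IsGraph b)
    (hv : ∀ x, 0 < v x) (hvF : memF b v) (x : X) :
    HasZeroCapacity (groundGraph b v) (groundPotential b q w v) x := by
  intro ε hε
  have hvx := hv x
  obtain ⟨φ, hφ, hlt⟩ := hcrit.exists_quadForm_lt x (ε := ε / v x ^ 2) (by positivity)
  have hψ : HasFiniteSupport fun y => φ y / v y := by
    simp only [div_eq_mul_inv]
    fun_prop
  have hground := hb.quadForm_mul_eq_groundState (fun y => (hv y).le) hvF q w hψ
  simp only [mul_div_cancel₀ _ (hv _).ne'] at hground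
  refine ⟨fun y => φ y / v y, hψ, ?_⟩
  calc quadForm (groundGraph b v) (groundPotential b q w v) (fun y => φ y / v y)
      < ε / v x ^ 2 * φ x ^ 2 := by linarith
    _ = ε * (φ x / v x) ^ 2 := by ring

lemma quadForm_mul_le_of_hardy (hb : IsGraph b) (hv : 0 ≤ v) (hvF : memF b v)
    (hψ : HasFiniteSupport ψ) {lam : ℝ} (hlam : 0 < lam)
    (hardy : (1 + lam) * ∑' x, w x * (v x * ψ x) ^ 2 ≤ quadForm b q fun x => v x * ψ x) :
    quadForm b q (fun x => v x * ψ x) ≤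
      (1 + 1 / lam) * quadForm (groundGraph b v) (groundPotential b q w v) ψ := by
  have hground := hb.quadForm_mul_eq_groundState hv hvF q w hψ
  have hw_le : ∑' x, w x * (v x * ψ x) ^ 2 ≤
      quadForm (groundGraph b v) (groundPotential b q w v) ψ / lam := by
    rw [le_div_iff₀ hlam]
    linarith
  rw [one_add_mul, one_div_mul_eq_div]
  linarith

lemma exists_quadForm_le_of_hardy (hb : IsGraph b) (hq : 0 ≤ q) (hv : ∀ x, 0 < v x)
    (hvF : memF b v) (hsuper : ∀ x, w x * v x ≤ schrod b q v x) (hcrit : IsCritical b q w)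
    {W : Set X} (hW : W.Finite) {lam : ℝ} (hlam : 0 < lam)
    (hardy : ∀ φ : X → ℝ, HasFiniteSupport φ → (∀ x ∈ W, φ x = 0) →
      (1 + lam) * ∑' x, w x * φ x ^ 2 ≤ quadForm b q φ) :
    ∃ C : ℝ, ∀ F : Finset X, ∃ φ : X → ℝ,
      HasFiniteSupport φ ∧ (∀ x ∈ F, φ x = v x) ∧ quadForm b q φ ≤ C := by
  classical
  have hv0 : 0 ≤ v := fun x => (hv x).le
  have hc := hb.isGraph_groundGraph hv0 hvF
  have hp := groundPotential_nonneg hv0 hsuper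
  set D := quadForm (groundGraph b v) (groundPotential b q w v)
  set χ : X → ℝ := W.indicator 1
  have hχ : HasFiniteSupport χ := hW.subset Set.support_indicator_subset
  refine ⟨2 * ((1 + 1 / lam) * (2 * (1 + D χ)) + quadForm b q fun x => v x * χ x), fun F => ?_⟩
  obtain ⟨ψ, hψ, -, hψ_one, hDψ⟩ := exists_cutoff_finset hc hp (F := F ∪ hW.toFinset)
    (fun x _ => hcrit.hasZeroCapacity hb hv hvF x) one_pos
  have hoff : ∀ x ∈ W, v x * (ψ x - χ x) = 0 := fun x hx => by
    simp [χ, hψ_one x (by simp [hx]), hx]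
  refine ⟨fun x => v x * ψ x, by fun_prop,
    fun x hx => by simp only [hψ_one x (Finset.mem_union_left _ hx), mul_one], ?_⟩
  calc quadForm b q (fun x => v x * ψ x)
      = quadForm b q (fun x => v x * (ψ x - χ x) + v x * χ x) := by
        simp only [← mul_add, sub_add_cancel]
    _ ≤ 2 * (quadForm b q (fun x => v x * (ψ x - χ x)) + quadForm b q fun x => v x * χ x) :=
        hb.quadForm_add_le hq (by fun_prop) (by fun_prop)
    _ ≤ 2 * ((1 + 1 / lam) * D (fun x => ψ x - χ x) + quadForm b q fun x => v x * χ x) := by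
        gcongr
        exact quadForm_mul_le_of_hardy hb hv0 hvF (by fun_prop) hlam
          (hardy _ (by fun_prop) hoff)
    _ ≤ 2 * ((1 + 1 / lam) * (2 * (1 + D χ)) + quadForm b q fun x => v x * χ x) := by
        gcongr
        exact (hc.quadForm_sub_le hp hψ hχ).trans (by gcongr)

theorem stmt16_general (hb : IsGraph b) (hq : 0 ≤ q) (hv : ∀ x, 0 < v x) (hvF : memF b v)
    (hsuper : ∀ x, w x * v x ≤ schrod b q v x) (hcrit : IsCritical b q w)
    (hdiv : extQuadForm b q v = ⊤) {W : Set X} (hW : W.Finite) {lam : ℝ} (hlam : 0 < lam) :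
    ∃ φ : X → ℝ, φ.support.Finite ∧ (∀ x ∈ W, φ x = 0) ∧
      quadForm b q φ < (1 + lam) * ∑' x, w x * φ x ^ 2 := by
  by_contra! hardy
  obtain ⟨C, hC⟩ := exists_quadForm_le_of_hardy hb hq hv hvF hsuper hcrit hW hlam hardy
  have hbound : extQuadForm b q v ≤ ENNReal.ofReal C :=
    extQuadForm_le_of_forall_finset fun F =>
      let ⟨φ, hφ, hφF, hφC⟩ := hC F
      ⟨φ, hφF, (hb.extQuadForm_eq_ofReal hq hφ).trans_le (ENNReal.ofReal_le_ofReal hφC)⟩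
  exact (hbound.trans_lt ENNReal.ofReal_lt_top).ne hdiv

/-- optimality near infinity. -/
theorem stmt16 (X : Type) [Countable X] [Infinite X]
    (b : X → X → ℝ) (q : X → ℝ)
    (hb_nonneg : ∀ x y, 0 ≤ b x y) (hb_symm : ∀ x y, b x y = b y x)
    (hb_diag : ∀ x, b x x = 0) (hb_row : ∀ x, Summable fun y => b x y)
    (hq_nonneg : ∀ x, 0 ≤ q x) (hq_fin : (Function.support q).Finite)
    (u : X → ℝ) (hu_mem : memF b u) (hu_pos : ∀ x, 0 < u x)
    (hu_noncst : ∃ x y : X, u x ≠ u y)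
    (hu_super : ∀ x, 0 ≤ schrod b q u x)
    (K : Set X) (hK : K.Finite) (hu_harm : ∀ x ∉ K, lap b u x = 0)
    (w : X → ℝ)
    (hw : ∀ x, w x = lap b (fun z => Real.sqrt (u z)) x / Real.sqrt (u x))
    (hcrit : (∀ φ : X → ℝ, (Function.support φ).Finite →
        quadForm b q φ ≥ ∑' x : X, w x * φ x ^ 2) ∧
      ¬ ∃ wt : X → ℝ, (∀ x, 0 ≤ wt x) ∧ wt ≠ 0 ∧
        (∀ φ : X → ℝ, (Function.support φ).Finite →
          quadForm b q φ ≥ ∑' x : X, (w x + wt x) * φ x ^ 2))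
    (hdiv : (1 / 2 : ℝ≥0∞) * (∑' p : X × X,
        ENNReal.ofReal (b p.1 p.2 * (Real.sqrt (u p.1) - Real.sqrt (u p.2)) ^ 2)) +
      (∑' x : X, ENNReal.ofReal (q x * u x)) = ⊤) :
    ∀ W : Set X, W.Finite → ∀ lam : ℝ, 0 < lam →
      ∃ φ : X → ℝ, (Function.support φ).Finite ∧ (∀ x ∈ W, φ x = 0) ∧
        quadForm b q φ < (1 + lam) * ∑' x : X, w x * φ x ^ 2 := by
  have hv : ∀ x, 0 < √(u x) := fun x => Real.sqrt_pos.2 (hu_pos x)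
  have hsuper : ∀ x, w x * √(u x) ≤ schrod b q (fun z => √(u z)) x := fun x => by
    rw [hw, div_mul_cancel₀ _ (hv x).ne']
    exact le_add_of_nonneg_right (mul_nonneg (hq_nonneg x) (hv x).le)
  have hb : IsGraph b := ⟨hb_nonneg, hb_symm, hb_row⟩
  have hdiv_ext : extQuadForm b q (fun z => √(u z)) = ⊤ := by
    simpa only [extQuadForm, Real.sq_sqrt (hu_pos _).le] using hdiv
  exact fun W hW lam hlam =>
    stmt16_general hb hq_nonneg hv (hb.memF_sqrt hu_mem) hsuper hcrit hdiv_ext hW hlam
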